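/- Under a scaling of the heterogeneous key predistribution model with on/off channels satisfying the scaling condition Λ_1(n) = α_n λ_1(n) = c_n (log n)/n with lim_{n→∞} c_n = c, if c < 1 then the probability that the random graph G(n; μ, K_n, P_n, α_n) has no isolated nodes tends to 0 as n → ∞. -/

import Mathlib

/-!
The proof is the second moment method for `I`, the number of isolated vertices of class `0` (the
class with the smallest key rings). Write `Λ = α λ₀`, `p = p₀₀`, `μ₀` for the probability of
class `0`, and `C = ∑ j, 1 / μ j`.

Given that `x` has class `0`, whatever its key ring is, every other vertex is joined to `x`
independently with probability `Λ`; hence `E I = n μ₀ (1 - Λ) ^ (n - 1)` (`first_moment`), which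
is roughly `n ^ (1 - c)` and tends to infinity.

For two vertices `x ≠ y` of class `0` with key rings `S`, `T`, a third vertex is joined to neither
with probability `1 - 2Λ + α² Q(S, T)`, where `Q(S, T)` is the probability that a random ring meets
both. If `S` and `T` are disjoint, the two events are negatively correlated (log-concavity of
falling factorials), which gives `α² Q ≤ C Λ²`; otherwise `α² Q ≤ α Λ` trivially. As `S` and `T`
meet with probability `p`, this yields `second_moment`, up to ignoring the channel between `x` and
`y`. After division by `μ₀² exp (-2 (n - 2) Λ)` the bound is at most
`exp (C n Λ²) + p (exp (n α Λ) - 1)`, and since `μ₀ α p ≤ Λ` the last term is at most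
`n Λ² exp (n Λ) / μ₀`, of order at most `n ^ (d - 1) (log n)²` for any fixed `d` with `c < d < 1`
(`mixture_le`, `scaling_limits`). Chebyshev's inequality (`chebyshev_count`) then gives `P(I = 0) → 0`.

Expectations are finite sums over configurations. `sum_wt` integrates out the channels, and
`sum_one_root`, `sum_two_roots` integrate out the vertices other than `x` (and `y`), which are
independent given the rings of `x` (and `y`).
-/

open Filter

/-- Probability that a uniformly random `b`-subset of a `P`-set avoids a fixed `a`-subset. -/
noncomputable def avoidProb (P a b : ℕ) : ℝ := ((P - a).choose b : ℝ) / (P.choose b : ℝ)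

/-- `p_{ab}` : probability that independent uniformly random key rings of sizes
`a` and `b` (from a pool of size `P`) intersect. -/
noncomputable def pEdge (P a b : ℕ) : ℝ := 1 - avoidProb P a b

/-- `λ_i` : mean edge probability of a class-`i` node in the inhomogeneous random key graph. -/
noncomputable def lamb {r : ℕ} (μ : Fin (r + 1) → ℝ) (K : Fin (r + 1) → ℕ) (P : ℕ)
    (i : Fin (r + 1)) : ℝ :=
  ∑ j, μ j * pEdge P (K i) (K j)

/-- A configuration of the model: a class for each vertex, a key ring for each vertex,
and an on/off state for each (unordered) channel. -/
abbrev Config (n r P : ℕ) := (Fin n → Fin (r + 1)) × (Fin n → Finset (Fin P)) × (Sym2 (Fin n) → Bool)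

/-- Probability weight of a configuration: classes are i.i.d. with law `μ`; given its class `i`,
a vertex's key ring is uniform among the `C(P, K i)` subsets of size `K i`; channels over
distinct pairs are i.i.d. Bernoulli(`α`) (diagonal channel variables are forced to `false`). -/
noncomputable def wt {n r P : ℕ} (μ : Fin (r + 1) → ℝ) (K : Fin (r + 1) → ℕ) (α : ℝ)
    (c : Config n r P) : ℝ :=
  (∏ x : Fin n, μ (c.1 x)) *
    (∏ x : Fin n, if (c.2.1 x).card = K (c.1 x) then ((P.choose (K (c.1 x)) : ℝ))⁻¹ else 0) *
    (∏ e : Sym2 (Fin n),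
      if e.IsDiag then (if c.2.2 e then 0 else 1) else (if c.2.2 e then α else 1 - α))

open Classical in
/-- Probability of an event under the heterogeneous key predistribution model
with on/off channels. -/
noncomputable def pr {n r P : ℕ} (μ : Fin (r + 1) → ℝ) (K : Fin (r + 1) → ℕ) (α : ℝ)
    (E : Config n r P → Prop) : ℝ :=
  ∑ c : Config n r P, if E c then wt μ K α c else 0

/-- Two vertices are adjacent iff their key rings intersect and the channel between them is on. -/
def Adj {n r P : ℕ} (c : Config n r P) (x y : Fin n) : Prop :=
  x ≠ y ∧ ((c.2.1 x) ∩ (c.2.1 y)).Nonempty ∧ c.2.2 s(x, y) = true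

/-- The random graph `G(n; μ, K, P, α)` as a simple graph. -/
def graphOf {n r P : ℕ} (c : Config n r P) : SimpleGraph (Fin n) :=
  SimpleGraph.fromRel (fun x y => ((c.2.1 x) ∩ (c.2.1 y)).Nonempty ∧ c.2.2 s(x, y) = true)

/-- A vertex is isolated if it has no neighbours. -/
def Isolated {n r P : ℕ} (c : Config n r P) (x : Fin n) : Prop := ∀ y, ¬ Adj c x y

/-- The graph has no isolated nodes. -/
def NoIsolatedNodes {n r P : ℕ} (c : Config n r P) : Prop := ∀ x, ¬ Isolated c x

/-! ### Factorization of sums over configurations -/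

lemma sum_pi_prod {V A : Type*} [Fintype V] [DecidableEq V] [Fintype A] (h : V → A → ℝ) :
    ∑ u : V → A, ∏ v, h v (u v) = ∏ v, ∑ a, h v a := by
  rw [Finset.prod_univ_sum, Fintype.piFinset_univ]

/-- The channels in a set `T` of non-diagonal pairs are all off with probability
`(1 - α) ^ #T`. -/
lemma sum_channels {n : ℕ} (α : ℝ) (T : Finset (Sym2 (Fin n))) (hT : ∀ e ∈ T, ¬ e.IsDiag) :
    ∑ b : Sym2 (Fin n) → Bool, (∏ e : Sym2 (Fin n),
      if e.IsDiag then (if b e then 0 else 1) else (if b e then α else 1 - α)) *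
      (if ∀ e ∈ T, b e = false then 1 else 0) = (1 - α) ^ T.card := by
  have h1 : ∀ b : Sym2 (Fin n) → Bool, (if ∀ e ∈ T, b e = false then (1 : ℝ) else 0) =
      ∏ e, (if e ∈ T ∧ b e = true then 0 else 1) := by
    intro b
    split_ifs with h
    · rw [Finset.prod_eq_one]
      intro e _
      rw [if_neg]
      rintro ⟨he, hb⟩
      simp [h e he] at hb
    · push Not at h
      obtain ⟨e, he, hb⟩ := h
      rw [Finset.prod_eq_zero (Finset.mem_univ e)]
      simp only [he, true_and]
      rw [if_pos]
      simpa using hb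
  simp_rw [h1, ← Finset.prod_mul_distrib]
  rw [sum_pi_prod (fun (e : Sym2 (Fin n)) (b : Bool) =>
    (if e.IsDiag then (if b then 0 else 1) else (if b then α else 1 - α)) *
      (if e ∈ T ∧ b = true then (0 : ℝ) else 1))]
  have h2 : ∀ e : Sym2 (Fin n), (∑ b : Bool,
      (if e.IsDiag then (if b then 0 else 1) else (if b then α else 1 - α)) *
      (if e ∈ T ∧ b = true then (0 : ℝ) else 1)) = if e ∈ T then 1 - α else 1 := by
    intro e
    by_cases he : e ∈ T
    · simp [he, hT e he]
    · by_cases hd : e.IsDiag <;> simp [he, hd]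
  simp_rw [h2]
  rw [Finset.prod_ite_mem, Finset.univ_inter, Finset.prod_const]

/-- Law of the pair (class, key ring) of a single vertex. -/
noncomputable def nodeWt {r P : ℕ} (μ : Fin (r + 1) → ℝ) (K : Fin (r + 1) → ℕ)
    (a : Fin (r + 1) × Finset (Fin P)) : ℝ :=
  μ a.1 * if a.2.card = K a.1 then ((P.choose (K a.1) : ℝ))⁻¹ else 0

/-- The (class, key ring) pairs of all vertices in a configuration. -/
def nodesOf {n r P : ℕ} (c : Config n r P) : Fin n → Fin (r + 1) × Finset (Fin P) :=
  fun v => (c.1 v, c.2.1 v)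

/-- Integrating out the channels from the event that all channels in `T` are off, where `T` may
depend on the classes and key rings. -/
lemma sum_wt {n r P : ℕ} (μ : Fin (r + 1) → ℝ) (K : Fin (r + 1) → ℕ) (α : ℝ)
    (g : (Fin n → Fin (r + 1) × Finset (Fin P)) → ℝ)
    (T : (Fin n → Fin (r + 1) × Finset (Fin P)) → Finset (Sym2 (Fin n)))
    (hT : ∀ u, ∀ e ∈ T u, ¬ e.IsDiag) :
    ∑ c : Config n r P, wt μ K α c *
      (g (nodesOf c) * if ∀ e ∈ T (nodesOf c), c.2.2 e = false then 1 else 0) =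
    ∑ u, (∏ v, nodeWt μ K (u v)) * (g u * (1 - α) ^ (T u).card) := by
  rw [Fintype.sum_prod_type]
  simp_rw [Fintype.sum_prod_type]
  rw [← (Equiv.arrowProdEquivProdArrow (Fin n) (fun _ => Fin (r + 1))
    (fun _ => Finset (Fin P))).symm.sum_comp, Fintype.sum_prod_type]
  refine Finset.sum_congr rfl fun t _ => Finset.sum_congr rfl fun S _ => ?_
  have hu : (Equiv.arrowProdEquivProdArrow (Fin n) (fun _ => Fin (r + 1))
    (fun _ => Finset (Fin P))).symm (t, S) = fun v => (t v, S v) := rfl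
  rw [hu, ← sum_channels α _ (hT _), Finset.mul_sum, Finset.mul_sum]
  refine Finset.sum_congr rfl fun b _ => ?_
  have hn : nodesOf (t, S, b) = fun v => (t v, S v) := rfl
  simp only [wt, hn, nodeWt, Finset.prod_mul_distrib]
  ring

/-- Integrating out all coordinates but `x`: given `u x`, the others are independent. -/
lemma sum_one_root {V A : Type*} [Fintype V] [DecidableEq V]
    [Fintype A] [DecidableEq A] (q f : A → ℝ) (ψ : A → A → ℝ) (x : V) :
    ∑ u : V → A, (∏ v, q (u v)) * (f (u x) * ∏ z ∈ Finset.univ.erase x, ψ (u x) (u z)) =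
    ∑ a, q a * f a * (∑ b, q b * ψ a b) ^ (Fintype.card V - 1) := by
  -- Conditioning on the value at each root turns the summand into a product over coordinates.
  have key : ∀ u : V → A,
      (∏ v, q (u v)) * (f (u x) * ∏ z ∈ Finset.univ.erase x, ψ (u x) (u z)) =
      ∑ a, ∏ v, (if v = x then (if u v = a then q a * f a else 0)
        else q (u v) * ψ a (u v)) := by
    intro u
    rw [Finset.sum_eq_single (u x)]
    · rw [← Finset.mul_prod_erase _ _ (Finset.mem_univ x),
        ← Finset.mul_prod_erase Finset.univ (fun v => if v = x then _ else _) (Finset.mem_univ x)]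
      rw [Finset.prod_congr rfl (g := fun v => q (u v) * ψ (u x) (u v))
        (fun v hv => if_neg (Finset.ne_of_mem_erase hv)), Finset.prod_mul_distrib]
      simp only [if_true]
      ring
    · intro a _ ha
      refine Finset.prod_eq_zero (Finset.mem_univ x) ?_
      rw [if_pos rfl, if_neg (Ne.symm ha)]
    · simp
  simp_rw [key]
  rw [Finset.sum_comm]
  refine Finset.sum_congr rfl fun a _ => ?_
  rw [sum_pi_prod (fun v b => if v = x then (if b = a then q a * f a else 0) else q b * ψ a b)]
  rw [← Finset.mul_prod_erase _ _ (Finset.mem_univ x)]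
  rw [Finset.prod_congr rfl (g := fun v => ∑ b, q b * ψ a b)
        (fun v hv => by simp [Finset.ne_of_mem_erase hv])]
  simp [Finset.card_erase_of_mem]

/-- Integrating out all coordinates but `x` and `y`. -/
lemma sum_two_roots {V A : Type*} [Fintype V] [DecidableEq V]
    [Fintype A] [DecidableEq A] (q f : A → ℝ) (ψ : A → A → A → ℝ)
    {x y : V} (hxy : x ≠ y) :
    ∑ u : V → A, (∏ v, q (u v)) * (f (u x) * f (u y) *
      ∏ z ∈ (Finset.univ.erase x).erase y, ψ (u x) (u y) (u z)) =
    ∑ a, ∑ a', q a * f a * (q a' * f a') *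
      (∑ b, q b * ψ a a' b) ^ (Fintype.card V - 2) := by
  have hy : y ∈ Finset.univ.erase x := Finset.mem_erase.2 ⟨hxy.symm, Finset.mem_univ y⟩
  -- Conditioning on the value at each root turns the summand into a product over coordinates.
  have key : ∀ u : V → A,
      (∏ v, q (u v)) * (f (u x) * f (u y) *
        ∏ z ∈ (Finset.univ.erase x).erase y, ψ (u x) (u y) (u z)) =
      ∑ a, ∑ a', ∏ v, (if v = x then (if u v = a then q a * f a else 0)
        else if v = y then (if u v = a' then q a' * f a' else 0)
        else q (u v) * ψ a a' (u v)) := by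
    intro u
    rw [Finset.sum_eq_single (u x), Finset.sum_eq_single (u y)]
    · rw [← Finset.mul_prod_erase _ _ (Finset.mem_univ x), ← Finset.mul_prod_erase _ _ hy,
        ← Finset.mul_prod_erase Finset.univ (fun v => if v = x then _ else _) (Finset.mem_univ x),
        ← Finset.mul_prod_erase _ (fun v => if v = x then _ else _) hy]
      have hrest : ∏ v ∈ (Finset.univ.erase x).erase y,
          (if v = x then (if u v = u x then q (u x) * f (u x) else 0)
            else if v = y then (if u v = u y then q (u y) * f (u y) else 0)
            else q (u v) * ψ (u x) (u y) (u v)) =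
          ∏ v ∈ (Finset.univ.erase x).erase y, q (u v) * ψ (u x) (u y) (u v) :=
        Finset.prod_congr rfl fun v hv => by
          rw [if_neg (Finset.ne_of_mem_erase (Finset.mem_of_mem_erase hv)),
            if_neg (Finset.ne_of_mem_erase hv)]
      rw [hrest, Finset.prod_mul_distrib]
      simp only [if_true, if_neg hxy.symm]
      ring
    · intro a _ ha
      refine Finset.prod_eq_zero (Finset.mem_univ y) ?_
      rw [if_neg hxy.symm, if_pos rfl, if_neg (Ne.symm ha)]
    · simp
    · intro a _ ha
      refine Finset.sum_eq_zero fun a' _ => Finset.prod_eq_zero (Finset.mem_univ x) ?_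
      rw [if_pos rfl, if_neg (Ne.symm ha)]
    · simp
  simp_rw [key]
  rw [Finset.sum_comm]
  refine Finset.sum_congr rfl fun a _ => ?_
  rw [Finset.sum_comm]
  refine Finset.sum_congr rfl fun a' _ => ?_
  rw [sum_pi_prod (fun v b => if v = x then (if b = a then q a * f a else 0)
        else if v = y then (if b = a' then q a' * f a' else 0) else q b * ψ a a' b)]
  rw [← Finset.mul_prod_erase _ _ (Finset.mem_univ x), ← Finset.mul_prod_erase _ _ hy]
  rw [Finset.prod_congr rfl (g := fun v => ∑ b, q b * ψ a a' b)
        (fun v hv => by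
          simp [Finset.ne_of_mem_erase hv, Finset.ne_of_mem_erase (Finset.mem_of_mem_erase hv)])]
  simp [Finset.card_erase_of_mem hy, hxy.symm, Nat.sub_sub]
  ring

/-! ### Averages over key rings -/

/-- Indicator that two key rings share a key. -/
noncomputable def hit {P : ℕ} (S S' : Finset (Fin P)) : ℝ := if (S ∩ S').Nonempty then 1 else 0

/-- Average of `f` over the key rings of size `k`. -/
noncomputable def ringAvg {P : ℕ} (k : ℕ) (f : Finset (Fin P) → ℝ) : ℝ :=
  ∑ S, (if S.card = k then ((P.choose k : ℝ))⁻¹ else 0) * f S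

lemma sum_nodeWt {r P : ℕ} (μ : Fin (r + 1) → ℝ) (K : Fin (r + 1) → ℕ)
    (f : Fin (r + 1) → Finset (Fin P) → ℝ) :
    ∑ a : Fin (r + 1) × Finset (Fin P), nodeWt μ K a * f a.1 a.2 =
      ∑ j, μ j * ringAvg (K j) (f j) := by
  rw [Fintype.sum_prod_type]
  simp only [nodeWt, ringAvg, Finset.mul_sum]
  refine Finset.sum_congr rfl fun j _ => Finset.sum_congr rfl fun S _ => by ring

lemma ringAvg_mono {P k : ℕ} {f g : Finset (Fin P) → ℝ} (h : ∀ S, S.card = k → f S ≤ g S) :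
    ringAvg k f ≤ ringAvg k g := by
  refine Finset.sum_le_sum fun S _ => ?_
  split_ifs with hS
  · exact mul_le_mul_of_nonneg_left (h S hS) (by positivity)
  · simp

lemma ringAvg_add {P k : ℕ} (f g : Finset (Fin P) → ℝ) :
    ringAvg k (fun S => f S + g S) = ringAvg k f + ringAvg k g := by
  simp only [ringAvg, mul_add, Finset.sum_add_distrib]

lemma ringAvg_mul {P k : ℕ} (c : ℝ) (f : Finset (Fin P) → ℝ) :
    ringAvg k (fun S => c * f S) = c * ringAvg k f := by
  simp only [ringAvg, Finset.mul_sum]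
  exact Finset.sum_congr rfl fun S _ => by ring

lemma ringAvg_miss {P k : ℕ} (T : Finset (Fin P)) :
    ringAvg k (fun S => 1 - hit T S) = avoidProb P T.card k := by
  have h : ∀ S : Finset (Fin P), (if S.card = k then ((P.choose k : ℝ))⁻¹ else 0) * (1 - hit T S)
      = if S ∈ Finset.powersetCard k Tᶜ then ((P.choose k : ℝ))⁻¹ else 0 := by
    intro S
    have : S ⊆ Tᶜ ↔ ¬ (T ∩ S).Nonempty := by
      rw [← Finset.not_disjoint_iff_nonempty_inter, not_not, Finset.subset_compl_iff_disjoint_left]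
    by_cases h1 : S.card = k <;> by_cases h2 : (T ∩ S).Nonempty <;>
      simp [hit, Finset.mem_powersetCard, this, h1, h2]
  simp only [ringAvg, h]
  rw [Finset.sum_ite_mem, Finset.univ_inter, Finset.sum_const, Finset.card_powersetCard,
    Finset.card_compl, Fintype.card_fin, nsmul_eq_mul, avoidProb, div_eq_mul_inv]

lemma ringAvg_one {P k : ℕ} (hk : k ≤ P) : ringAvg k (fun _ : Finset (Fin P) => 1) = 1 := by
  have h := ringAvg_miss (P := P) (k := k) ∅
  have hne : (P.choose k : ℝ) ≠ 0 := by exact_mod_cast (Nat.choose_pos hk).ne'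
  simpa [hit, avoidProb, hne] using h

lemma ringAvg_hit {P k : ℕ} (hk : k ≤ P) (T : Finset (Fin P)) :
    ringAvg k (fun S => hit T S) = pEdge P T.card k := by
  have h := ringAvg_add (k := k) (fun S => 1 - hit T S) (fun S => hit T S)
  simp only [sub_add_cancel] at h
  rw [ringAvg_one hk, ringAvg_miss] at h
  rw [pEdge]; linarith

lemma hit_nonneg {P : ℕ} (S T : Finset (Fin P)) : 0 ≤ hit S T := by
  unfold hit; split_ifs <;> norm_num

lemma hit_le_one {P : ℕ} (S T : Finset (Fin P)) : hit S T ≤ 1 := by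
  unfold hit; split_ifs <;> norm_num

lemma ringAvg_nonneg {P k : ℕ} {f : Finset (Fin P) → ℝ} (h : ∀ S, 0 ≤ f S) : 0 ≤ ringAvg k f :=
  Finset.sum_nonneg fun S _ => mul_nonneg (by split_ifs <;> positivity) (h S)

/-- Log-concavity of falling factorials in the base. -/
lemma descFactorial_logconcave (P a k : ℕ) :
    (P - 2 * a).descFactorial k * P.descFactorial k ≤ (P - a).descFactorial k ^ 2 := by
  induction k with
  | zero => simp
  | succ k ih =>
    simp only [Nat.descFactorial_succ]
    have h : (P - 2 * a - k) * (P - k) ≤ (P - a - k) ^ 2 := by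
      rcases le_total (P - 2 * a) k with h | h
      · rw [Nat.sub_eq_zero_of_le h]; simp
      · by_cases hP : P ≤ 2 * a
        · simp [Nat.sub_eq_zero_of_le hP]
        · obtain ⟨d, rfl⟩ : ∃ d, P = 2 * a + k + d := ⟨P - 2 * a - k, by omega⟩
          rw [show 2 * a + k + d - 2 * a - k = d by omega, show 2 * a + k + d - k = 2 * a + d by omega,
            show 2 * a + k + d - a - k = a + d by omega]
          nlinarith
    calc _ = ((P - 2 * a - k) * (P - k)) * ((P - 2 * a).descFactorial k * P.descFactorial k) := by ring
      _ ≤ (P - a - k) ^ 2 * (P - a).descFactorial k ^ 2 := Nat.mul_le_mul h ih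
      _ = _ := by ring

lemma avoidProb_two_mul_le {P a k : ℕ} (hk : k ≤ P) :
    avoidProb P (2 * a) k ≤ avoidProb P a k ^ 2 := by
  have h := descFactorial_logconcave P a k
  simp only [Nat.descFactorial_eq_factorial_mul_choose] at h
  have hf : 0 < k.factorial ^ 2 := by positivity
  have h' : (P - 2 * a).choose k * P.choose k ≤ (P - a).choose k ^ 2 := by
    refine Nat.le_of_mul_le_mul_left ?_ hf
    calc _ = _ := by ring
      _ ≤ _ := h
      _ = _ := by ring
  have hpos : (0 : ℝ) < P.choose k := by exact_mod_cast Nat.choose_pos hk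
  unfold avoidProb
  rw [div_pow, div_le_div_iff₀ hpos (by positivity)]
  have h'' : ((P - 2 * a).choose k : ℝ) * P.choose k ≤ (P - a).choose k ^ 2 := by exact_mod_cast h'
  nlinarith

/-- Disjoint key rings are hit in a negatively correlated way. -/
lemma ringAvg_hit_mul_hit_le {P k : ℕ} (hk : k ≤ P) {S T : Finset (Fin P)} (hST : hit S T = 0)
    (hc : S.card = T.card) :
    ringAvg k (fun R => hit S R * hit T R) ≤ pEdge P S.card k ^ 2 := by
  have hd : Disjoint S T := by
    by_contra h
    rw [Finset.not_disjoint_iff_nonempty_inter] at h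
    simp [hit, h] at hST
  have hu : ∀ R, (1 - hit S R) * (1 - hit T R) = 1 - hit (S ∪ T) R := by
    intro R
    have : ((S ∪ T) ∩ R).Nonempty ↔ (S ∩ R).Nonempty ∨ (T ∩ R).Nonempty := by
      rw [Finset.union_inter_distrib_right, Finset.union_nonempty]
    by_cases h1 : (S ∩ R).Nonempty <;> by_cases h2 : (T ∩ R).Nonempty <;>
      simp [hit, this, h1, h2]
  have e : ∀ R, hit S R * hit T R = (1 - hit (S ∪ T) R) + (hit S R + (hit T R + (-1) * 1)) := by
    intro R; rw [← hu]; ring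
  simp_rw [e]
  rw [ringAvg_add, ringAvg_add, ringAvg_add, ringAvg_mul, ringAvg_one hk, ringAvg_hit hk,
    ringAvg_hit hk, ringAvg_miss, Finset.card_union_of_disjoint hd, ← hc, ← two_mul]
  have := avoidProb_two_mul_le (P := P) (a := S.card) hk
  unfold pEdge
  nlinarith

/-! ### Isolation events -/

/-- The channels joining `x` to those vertices of `D` whose key ring meets that of `x`. -/
def edgesTo {n r P : ℕ} (x : Fin n) (D : Finset (Fin n))
    (u : Fin n → Fin (r + 1) × Finset (Fin P)) : Finset (Sym2 (Fin n)) :=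
  (D.filter fun z => ((u x).2 ∩ (u z).2).Nonempty).image fun z => s(x, z)

lemma mem_edgesTo {n r P : ℕ} {x : Fin n} {D : Finset (Fin n)}
    {u : Fin n → Fin (r + 1) × Finset (Fin P)} {e : Sym2 (Fin n)} :
    e ∈ edgesTo x D u ↔ ∃ z, (z ∈ D ∧ ((u x).2 ∩ (u z).2).Nonempty) ∧ s(x, z) = e := by
  simp only [edgesTo, Finset.mem_image, Finset.mem_filter]

lemma edgesTo_not_diag {n r P : ℕ} {x : Fin n} {D : Finset (Fin n)} (hx : x ∉ D)
    (u : Fin n → Fin (r + 1) × Finset (Fin P)) : ∀ e ∈ edgesTo x D u, ¬ e.IsDiag := by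
  intro e he
  simp only [edgesTo, Finset.mem_image, Finset.mem_filter] at he
  obtain ⟨z, ⟨hz, -⟩, rfl⟩ := he
  rw [Sym2.mk_isDiag_iff]
  rintro rfl
  exact hx hz

lemma pow_card_edgesTo {n r P : ℕ} (α : ℝ) (x : Fin n) (D : Finset (Fin n))
    (u : Fin n → Fin (r + 1) × Finset (Fin P)) :
    (1 - α) ^ (edgesTo x D u).card = ∏ z ∈ D, (1 - α * hit (u x).2 (u z).2) := by
  rw [edgesTo, Finset.card_image_of_injective _ (fun a b h => Sym2.congr_right.1 h),
    ← Finset.prod_const, Finset.prod_filter]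
  refine Finset.prod_congr rfl fun z _ => ?_
  unfold hit
  split_ifs <;> ring

open Classical in
/-- Indicator that `x` is an isolated vertex of the class with the smallest key rings. -/
noncomputable def isoInd {n r P : ℕ} (x : Fin n) (c : Config n r P) : ℝ :=
  if c.1 x = 0 ∧ Isolated c x then 1 else 0

lemma isoInd_eq {n r P : ℕ} (x : Fin n) (c : Config n r P) :
    isoInd x c = (if (nodesOf c x).1 = 0 then 1 else 0) *
      if ∀ e ∈ edgesTo x (Finset.univ.erase x) (nodesOf c), c.2.2 e = false then 1 else 0 := by
  have h : Isolated c x ↔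
      ∀ e ∈ edgesTo x (Finset.univ.erase x) (nodesOf c), c.2.2 e = false := by
    simp only [Isolated, Adj, mem_edgesTo, nodesOf, Finset.mem_erase, Finset.mem_univ, and_true]
    constructor
    · rintro h e ⟨z, ⟨hz, hne⟩, rfl⟩
      by_contra hb
      exact h z ⟨hz.symm, hne, by simpa using hb⟩
    · rintro h z ⟨hz, hne, hb⟩
      have := h _ ⟨z, ⟨hz.symm, hne⟩, rfl⟩
      simp [hb] at this
  unfold isoInd
  rw [h]
  simp only [nodesOf]
  split_ifs <;> simp_all

/-- The channel between `x` and `y` is discarded, so that the remaining conditions factor over the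
other vertices. -/
lemma isoInd_mul_le {n r P : ℕ} (x y : Fin n) (c : Config n r P) :
    isoInd x c * isoInd y c ≤
      ((if (nodesOf c x).1 = 0 then 1 else 0) * (if (nodesOf c y).1 = 0 then 1 else 0)) *
      if ∀ e ∈ edgesTo x ((Finset.univ.erase x).erase y) (nodesOf c) ∪
        edgesTo y ((Finset.univ.erase x).erase y) (nodesOf c), c.2.2 e = false then 1 else 0 := by
  have hsub : ∀ (v : Fin n) (D D' : Finset (Fin n)), D ⊆ D' →
      edgesTo v D (nodesOf c) ⊆ edgesTo v D' (nodesOf c) := fun v D D' h =>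
    Finset.image_subset_image (Finset.filter_subset_filter _ h)
  have hx := hsub x _ _ (Finset.erase_subset y (Finset.univ.erase x))
  have hy := hsub y ((Finset.univ.erase x).erase y) (Finset.univ.erase y)
    (Finset.erase_subset_erase _ (Finset.subset_univ _))
  rw [isoInd_eq, isoInd_eq]
  by_cases h1 : ∀ e ∈ edgesTo x (Finset.univ.erase x) (nodesOf c), c.2.2 e = false
  · by_cases h2 : ∀ e ∈ edgesTo y (Finset.univ.erase y) (nodesOf c), c.2.2 e = false
    · have h3 : ∀ e ∈ edgesTo x ((Finset.univ.erase x).erase y) (nodesOf c) ∪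
          edgesTo y ((Finset.univ.erase x).erase y) (nodesOf c), c.2.2 e = false := by
        intro e he
        rcases Finset.mem_union.1 he with he | he
        · exact h1 e (hx he)
        · exact h2 e (hy he)
      rw [if_pos h1, if_pos h2, if_pos h3]
      simp only [mul_one, le_refl]
    · rw [if_neg h2]
      simp only [mul_zero]
      split_ifs <;> simp
  · rw [if_neg h1]
    simp only [mul_zero, zero_mul]
    split_ifs <;> simp

/-! ### First and second moments -/

section Model
variable {n r P : ℕ} {μ : Fin (r + 1) → ℝ} {K : Fin (r + 1) → ℕ} {α : ℝ}

lemma nodeWt_nonneg (hμ : ∀ i, 0 < μ i) (a : Fin (r + 1) × Finset (Fin P)) :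
    0 ≤ nodeWt μ K a := by
  unfold nodeWt
  have := (hμ a.1).le
  split_ifs <;> positivity

lemma wt_nonneg (hμ : ∀ i, 0 < μ i) (hα : α ∈ Set.Ioo (0 : ℝ) 1) (c : Config n r P) :
    0 ≤ wt μ K α c := by
  unfold wt
  obtain ⟨h0, h1⟩ := hα
  refine mul_nonneg (mul_nonneg (Finset.prod_nonneg fun x _ => (hμ _).le)
    (Finset.prod_nonneg fun x _ => ?_)) (Finset.prod_nonneg fun e _ => ?_)
  · split_ifs <;> positivity
  · split_ifs <;> linarith

lemma sum_nodeWt_one (hμs : ∑ i, μ i = 1) (hK : ∀ j, K j ≤ P) :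
    ∑ a : Fin (r + 1) × Finset (Fin P), nodeWt μ K a = 1 := by
  have h := sum_nodeWt (P := P) μ K (fun _ _ => 1)
  simp only [mul_one, ringAvg_one (hK _), hμs] at h
  exact h

lemma sum_wt_one (hμs : ∑ i, μ i = 1) (hK : ∀ j, K j ≤ P) :
    ∑ c : Config n r P, wt μ K α c = 1 := by
  have h := sum_wt (n := n) (P := P) μ K α (fun _ => 1) (fun _ => ∅) (by simp)
  simp only [Finset.notMem_empty, false_imp_iff, implies_true, if_true, mul_one,
    Finset.card_empty, pow_zero] at h
  rw [h, sum_pi_prod (fun _ a => nodeWt μ K a), sum_nodeWt_one hμs hK]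
  simp

lemma sum_nodeWt_zero_class (f : Finset (Fin P) → ℝ) :
    ∑ a : Fin (r + 1) × Finset (Fin P), nodeWt μ K a * (if a.1 = 0 then 1 else 0) * f a.2 =
      μ 0 * ringAvg (K 0) f := by
  have h := sum_nodeWt (P := P) μ K (fun j S => (if j = 0 then 1 else 0) * f S)
  simp only [ringAvg_mul, ← mul_assoc] at h
  rw [h]
  simp

/-- Probability that a random node is not joined to a given node with key ring `S`. -/
lemma sum_nodeWt_miss (hμs : ∑ i, μ i = 1) (hK : ∀ j, K j ≤ P) (S : Finset (Fin P))
    (hS : S.card = K 0) :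
    ∑ b : Fin (r + 1) × Finset (Fin P), nodeWt μ K b * (1 - α * hit S b.2) =
      1 - α * lamb μ K P 0 := by
  rw [sum_nodeWt (P := P) μ K (fun _ R => 1 - α * hit S R)]
  have : ∀ j, ringAvg (K j) (fun R => 1 - α * hit S R) = 1 - α * pEdge P (K 0) (K j) := by
    intro j
    have h := ringAvg_add (k := K j) (fun _ => 1) (fun R => (-α) * hit S R)
    rw [ringAvg_mul, ringAvg_one (hK j), ringAvg_hit (hK j), hS] at h
    simp only [neg_mul, ← sub_eq_add_neg] at h
    exact h
  simp only [this, lamb, mul_sub, mul_one, Finset.sum_sub_distrib, hμs, Finset.mul_sum]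
  congr 1
  exact Finset.sum_congr rfl fun j _ => by ring

lemma nodeWt_eq_zero {a : Fin (r + 1) × Finset (Fin P)} (h : a.2.card ≠ K a.1) :
    nodeWt μ K a = 0 := by
  simp [nodeWt, h]

lemma first_moment (hμs : ∑ i, μ i = 1) (hK : ∀ j, K j ≤ P) (x : Fin n) :
    ∑ c : Config n r P, wt μ K α c * isoInd x c =
      μ 0 * (1 - α * lamb μ K P 0) ^ (n - 1) := by
  simp_rw [isoInd_eq]
  rw [sum_wt μ K α (fun u => if (u x).1 = 0 then 1 else 0)
    (fun u => edgesTo x (Finset.univ.erase x) u)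
    (fun u => edgesTo_not_diag (Finset.notMem_erase x _) u)]
  simp_rw [pow_card_edgesTo]
  rw [sum_one_root (nodeWt μ K) (fun a => if a.1 = 0 then 1 else 0)
    (fun a b => 1 - α * hit a.2 b.2) x, Fintype.card_fin]
  have h : ∀ a : Fin (r + 1) × Finset (Fin P),
      nodeWt μ K a * (if a.1 = 0 then 1 else 0) *
        (∑ b : Fin (r + 1) × Finset (Fin P), nodeWt μ K b * (1 - α * hit a.2 b.2)) ^ (n - 1) =
      nodeWt μ K a * (if a.1 = 0 then 1 else 0) * (1 - α * lamb μ K P 0) ^ (n - 1) := by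
    intro a
    by_cases ha : a.1 = 0
    · by_cases hc : a.2.card = K a.1
      · rw [sum_nodeWt_miss hμs hK _ (by rw [hc, ha])]
      · simp [nodeWt_eq_zero hc]
    · simp [ha]
  rw [Finset.sum_congr rfl fun a _ => h a,
    sum_nodeWt_zero_class (fun _ => (1 - α * lamb μ K P 0) ^ (n - 1))]
  have := ringAvg_mul (P := P) (k := K 0) ((1 - α * lamb μ K P 0) ^ (n - 1)) (fun _ => 1)
  rw [ringAvg_one (hK 0)] at this
  simp only [mul_one] at this
  rw [this]

lemma pEdge_nonneg {P a k : ℕ} (ha : a ≤ P) (hk : k ≤ P) : 0 ≤ pEdge P a k := by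
  obtain ⟨S, -, hS⟩ := Finset.exists_subset_card_eq (s := (Finset.univ : Finset (Fin P)))
    (n := a) (by simpa using ha)
  rw [← hS, ← ringAvg_hit hk]
  exact ringAvg_nonneg fun R => hit_nonneg _ _

lemma pEdge_le_one (P a k : ℕ) : pEdge P a k ≤ 1 := by
  unfold pEdge avoidProb
  have : (0 : ℝ) ≤ ((P - a).choose k : ℝ) / (P.choose k : ℝ) := by positivity
  linarith

lemma lamb_nonneg (hμ : ∀ i, 0 < μ i) (hK : ∀ j, K j ≤ P) : 0 ≤ lamb μ K P 0 :=
  Finset.sum_nonneg fun j _ => mul_nonneg (hμ j).le (pEdge_nonneg (hK 0) (hK j))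

lemma mul_pEdge_le_lamb (hμ : ∀ i, 0 < μ i) (hK : ∀ j, K j ≤ P) (j : Fin (r + 1)) :
    μ j * pEdge P (K 0) (K j) ≤ lamb μ K P 0 :=
  Finset.single_le_sum (f := fun j => μ j * pEdge P (K 0) (K j))
    (fun j _ => mul_nonneg (hμ j).le (pEdge_nonneg (hK 0) (hK j))) (Finset.mem_univ j)

/-- Expansion of the probability that a random node is joined to neither of two given nodes. -/
lemma sum_nodeWt_miss_two (hμs : ∑ i, μ i = 1) (hK : ∀ j, K j ≤ P) (S T : Finset (Fin P))
    (hS : S.card = K 0) (hT : T.card = K 0) :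
    ∑ b : Fin (r + 1) × Finset (Fin P),
      nodeWt μ K b * ((1 - α * hit S b.2) * (1 - α * hit T b.2)) =
      1 - 2 * (α * lamb μ K P 0) +
        α ^ 2 * ∑ j, μ j * ringAvg (K j) (fun R => hit S R * hit T R) := by
  rw [← sum_nodeWt (P := P) μ K (fun _ R => hit S R * hit T R), Finset.mul_sum]
  have h1 := sum_nodeWt_miss (α := α) hμs hK S hS
  have h2 := sum_nodeWt_miss (α := α) hμs hK T hT
  have h3 := sum_nodeWt_one (P := P) hμs hK
  have : 1 - 2 * (α * lamb μ K P 0) =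
      (1 - α * lamb μ K P 0) + (1 - α * lamb μ K P 0) - 1 := by ring
  rw [this]
  conv_rhs => enter [1, 1, 1]; rw [← h1]
  conv_rhs => enter [1, 1, 2]; rw [← h2]
  conv_rhs => enter [1, 2]; rw [← h3]
  rw [← Finset.sum_add_distrib, ← Finset.sum_sub_distrib, ← Finset.sum_add_distrib]
  exact Finset.sum_congr rfl fun b _ => by ring

/-- Two disjoint rings: the second-order term is `O(Λ²)`. -/
lemma miss_two_le_of_disjoint (hμ : ∀ i, 0 < μ i) (hμs : ∑ i, μ i = 1) (hK : ∀ j, K j ≤ P)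
    (S T : Finset (Fin P)) (hS : S.card = K 0) (hT : T.card = K 0) (hST : hit S T = 0) :
    ∑ b : Fin (r + 1) × Finset (Fin P),
      nodeWt μ K b * ((1 - α * hit S b.2) * (1 - α * hit T b.2)) ≤
      1 - 2 * (α * lamb μ K P 0) + (∑ j, (μ j)⁻¹) * (α * lamb μ K P 0) ^ 2 := by
  rw [sum_nodeWt_miss_two hμs hK S T hS hT]
  have : ∑ j, μ j * ringAvg (K j) (fun R => hit S R * hit T R) ≤
      (∑ j, (μ j)⁻¹) * lamb μ K P 0 ^ 2 := by
    rw [Finset.sum_mul]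
    refine Finset.sum_le_sum fun j _ => ?_
    have h1 := ringAvg_hit_mul_hit_le (hK j) hST (by rw [hS, hT])
    rw [hS] at h1
    have h2 := mul_pEdge_le_lamb hμ hK j
    have h0 := mul_nonneg (hμ j).le (pEdge_nonneg (hK 0) (hK j))
    calc _ ≤ μ j * pEdge P (K 0) (K j) ^ 2 := mul_le_mul_of_nonneg_left h1 (hμ j).le
      _ = (μ j)⁻¹ * (μ j * pEdge P (K 0) (K j)) ^ 2 := by
        have := (hμ j).ne'
        field_simp
      _ ≤ _ := mul_le_mul_of_nonneg_left (pow_le_pow_left₀ h0 h2 2) (inv_nonneg.2 (hμ j).le)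
  nlinarith [mul_le_mul_of_nonneg_left this (sq_nonneg α)]

/-- Arbitrary rings: a vertex meeting both rings meets the first one. -/
lemma miss_two_le (hμ : ∀ i, 0 < μ i) (hμs : ∑ i, μ i = 1) (hK : ∀ j, K j ≤ P)
    (S T : Finset (Fin P)) (hS : S.card = K 0) (hT : T.card = K 0) :
    ∑ b : Fin (r + 1) × Finset (Fin P),
      nodeWt μ K b * ((1 - α * hit S b.2) * (1 - α * hit T b.2)) ≤
      1 - 2 * (α * lamb μ K P 0) + α * (α * lamb μ K P 0) := by
  rw [sum_nodeWt_miss_two hμs hK S T hS hT]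
  have : ∑ j, μ j * ringAvg (K j) (fun R => hit S R * hit T R) ≤ lamb μ K P 0 := by
    refine Finset.sum_le_sum fun j _ => mul_le_mul_of_nonneg_left ?_ (hμ j).le
    rw [← hS, ← ringAvg_hit (hK j)]
    refine ringAvg_mono fun R _ => ?_
    have := hit_le_one T R
    have := hit_nonneg S R
    nlinarith
  nlinarith [mul_le_mul_of_nonneg_left this (sq_nonneg α)]

lemma miss_two_nonneg (hμ : ∀ i, 0 < μ i) (hα : α ∈ Set.Ioo (0 : ℝ) 1) (S T : Finset (Fin P)) :
    0 ≤ ∑ b : Fin (r + 1) × Finset (Fin P),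
      nodeWt μ K b * ((1 - α * hit S b.2) * (1 - α * hit T b.2)) := by
  have h : ∀ S R : Finset (Fin P), 0 ≤ 1 - α * hit S R := fun S R => by
    have := hit_le_one S R
    have := hit_nonneg S R
    nlinarith [hα.1, hα.2]
  exact Finset.sum_nonneg fun b _ => mul_nonneg (nodeWt_nonneg hμ b) (mul_nonneg (h _ _) (h _ _))

/-- Bound on the joint isolation probability of two vertices of class `0`, split according to
whether their key rings are disjoint (`X`) or meet (`Y`). -/
lemma second_moment (hμ : ∀ i, 0 < μ i) (hμs : ∑ i, μ i = 1) (hK : ∀ j, K j ≤ P)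
    (hα : α ∈ Set.Ioo (0 : ℝ) 1) {x y : Fin n} (hxy : x ≠ y) {X Y : ℝ}
    (hX : X = (1 - 2 * (α * lamb μ K P 0) + (∑ j, (μ j)⁻¹) * (α * lamb μ K P 0) ^ 2) ^ (n - 2))
    (hY : Y = (1 - 2 * (α * lamb μ K P 0) + α * (α * lamb μ K P 0)) ^ (n - 2)) :
    ∑ c : Config n r P, wt μ K α c * (isoInd x c * isoInd y c) ≤
      μ 0 ^ 2 * ((1 - pEdge P (K 0) (K 0)) * X + pEdge P (K 0) (K 0) * Y) := by
  set D := (Finset.univ.erase x).erase y with hD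
  have hxD : x ∉ D := by simp [hD]
  have hyD : y ∉ D := by simp [hD]
  refine (Finset.sum_le_sum fun c _ => mul_le_mul_of_nonneg_left (isoInd_mul_le x y c)
    (wt_nonneg hμ hα c)).trans ?_
  rw [sum_wt μ K α (fun u => (if (u x).1 = 0 then 1 else 0) * (if (u y).1 = 0 then 1 else 0))
    (fun u => edgesTo x D u ∪ edgesTo y D u)
    (fun u e he => (Finset.mem_union.1 he).elim (edgesTo_not_diag hxD u e)
      (edgesTo_not_diag hyD u e))]
  have hdisj : ∀ u : Fin n → Fin (r + 1) × Finset (Fin P),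
      Disjoint (edgesTo x D u) (edgesTo y D u) := by
    intro u
    rw [Finset.disjoint_left]
    intro e h1 h2
    simp only [edgesTo, Finset.mem_image, Finset.mem_filter] at h1 h2
    obtain ⟨z, ⟨hz, -⟩, rfl⟩ := h1
    obtain ⟨z', ⟨hz', -⟩, he⟩ := h2
    rw [Sym2.eq_iff] at he
    rcases he with ⟨h, -⟩ | ⟨h, -⟩
    · exact hxy h.symm
    · exact hyD (h ▸ hz)
  simp_rw [Finset.card_union_of_disjoint (hdisj _), pow_add, pow_card_edgesTo,
    ← Finset.prod_mul_distrib]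
  rw [sum_two_roots (nodeWt μ K) (fun a => if a.1 = 0 then 1 else 0)
    (fun a a' b => (1 - α * hit a.2 b.2) * (1 - α * hit a'.2 b.2)) hxy, Fintype.card_fin]
  have hw : ∀ a : Fin (r + 1) × Finset (Fin P),
      0 ≤ nodeWt μ K a * (if a.1 = 0 then 1 else 0) := fun a =>
    mul_nonneg (nodeWt_nonneg hμ a) (by split_ifs <;> norm_num)
  have hw0 : ∀ a : Fin (r + 1) × Finset (Fin P), a.2.card ≠ K 0 →
      nodeWt μ K a * (if a.1 = 0 then 1 else 0) = 0 := fun a ha => by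
    by_cases h : a.1 = 0
    · rw [nodeWt_eq_zero (by rwa [h]), zero_mul]
    · simp [h]
  have hbound : ∀ a a' : Fin (r + 1) × Finset (Fin P),
      nodeWt μ K a * (if a.1 = 0 then 1 else 0) * (nodeWt μ K a' * (if a'.1 = 0 then 1 else 0)) *
        (∑ b : Fin (r + 1) × Finset (Fin P),
          nodeWt μ K b * ((1 - α * hit a.2 b.2) * (1 - α * hit a'.2 b.2))) ^ (n - 2) ≤
      nodeWt μ K a * (if a.1 = 0 then 1 else 0) * (nodeWt μ K a' * (if a'.1 = 0 then 1 else 0) *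
        (X + (Y - X) * hit a.2 a'.2)) := by
    intro a a'
    by_cases ha : a.2.card = K 0
    · by_cases ha' : a'.2.card = K 0
      · rw [mul_assoc]
        refine mul_le_mul_of_nonneg_left (mul_le_mul_of_nonneg_left ?_ (hw a')) (hw a)
        by_cases hh : hit a.2 a'.2 = 0
        · rw [hh, mul_zero, add_zero, hX]
          exact pow_le_pow_left₀ (miss_two_nonneg hμ hα _ _)
            (miss_two_le_of_disjoint hμ hμs hK _ _ ha ha' hh) _
        · have h1 : hit a.2 a'.2 = 1 := by
            unfold hit at hh ⊢
            split_ifs at hh ⊢ <;> simp_all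
          rw [h1, mul_one, add_sub_cancel, hY]
          exact pow_le_pow_left₀ (miss_two_nonneg hμ hα _ _) (miss_two_le hμ hμs hK _ _ ha ha') _
      · simp only [hw0 a' ha', zero_mul, mul_zero, le_refl]
    · simp only [hw0 a ha, zero_mul, le_refl]
  refine (Finset.sum_le_sum fun a _ => Finset.sum_le_sum fun a' _ => hbound a a').trans
    (le_of_eq ?_)
  have hin : ∀ a : Fin (r + 1) × Finset (Fin P),
      ∑ a' : Fin (r + 1) × Finset (Fin P),
        nodeWt μ K a * (if a.1 = 0 then 1 else 0) * (nodeWt μ K a' * (if a'.1 = 0 then 1 else 0) *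
          (X + (Y - X) * hit a.2 a'.2)) =
      nodeWt μ K a * (if a.1 = 0 then 1 else 0) *
        (μ 0 * (X + (Y - X) * pEdge P (K 0) (K 0)) * 1) := by
    intro a
    rw [← Finset.mul_sum]
    by_cases ha : a.2.card = K 0
    · rw [sum_nodeWt_zero_class (fun S => X + (Y - X) * hit a.2 S)]
      have h1 := ringAvg_add (k := K 0) (fun _ => X * 1) (fun S => (Y - X) * hit a.2 S)
      rw [ringAvg_mul, ringAvg_mul, ringAvg_one (hK 0), ringAvg_hit (hK 0), ha] at h1
      simp only [mul_one] at h1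
      rw [h1, mul_one]
    · rw [hw0 a ha, zero_mul, zero_mul]
  rw [Finset.sum_congr rfl fun a _ => hin a,
    sum_nodeWt_zero_class (fun _ => μ 0 * (X + (Y - X) * pEdge P (K 0) (K 0)) * 1),
    ringAvg_mul, ringAvg_one (hK 0)]
  ring

end Model

/-! ### Chebyshev bound and asymptotics -/

/-- Chebyshev's inequality for a sum of identically distributed `0`-`1` variables on a finite
probability space. -/
lemma chebyshev_count {Ω V : Type*} [Fintype Ω] [Fintype V] [DecidableEq V] (w : Ω → ℝ)
    (hw : ∀ ω, 0 ≤ w ω) (hw1 : ∑ ω, w ω = 1) (J : V → Ω → ℝ)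
    (hJ : ∀ x ω, J x ω * J x ω = J x ω) {m₁ m₂ : ℝ} (h1 : ∀ x, ∑ ω, w ω * J x ω = m₁)
    (h2 : ∀ x y, x ≠ y → ∑ ω, w ω * (J x ω * J y ω) ≤ m₂) (hm₂ : 0 ≤ m₂)
    (E : Ω → Prop) [DecidablePred E] (hE : ∀ ω, E ω → ∀ x, J x ω = 0) :
    (Fintype.card V * m₁) ^ 2 * ∑ ω, (if E ω then w ω else 0) ≤
      Fintype.card V * m₁ + (Fintype.card V : ℝ) ^ 2 * m₂ - (Fintype.card V * m₁) ^ 2 := by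
  set M := Fintype.card V * m₁ with hM
  have hmean : ∑ ω, w ω * ∑ x, J x ω = M := by
    simp_rw [Finset.mul_sum]
    rw [Finset.sum_comm, Finset.sum_congr rfl fun x _ => h1 x]
    simp [hM]
  have hsq : ∑ ω, w ω * (∑ x, J x ω) ^ 2 ≤ M + (Fintype.card V : ℝ) ^ 2 * m₂ := by
    have e : ∑ ω, w ω * (∑ x, J x ω) ^ 2 = ∑ x, ∑ y, ∑ ω, w ω * (J x ω * J y ω) := by
      simp_rw [sq, Finset.sum_mul_sum, Finset.mul_sum]
      rw [Finset.sum_comm]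
      exact Finset.sum_congr rfl fun x _ => Finset.sum_comm
    rw [e]
    calc _ ≤ ∑ x : V, ∑ y : V, ((if x = y then m₁ else 0) + m₂) := by
          refine Finset.sum_le_sum fun x _ => Finset.sum_le_sum fun y _ => ?_
          by_cases h : x = y
          · subst h
            simp_rw [hJ, h1]
            simp [hm₂]
          · simpa [h] using h2 x y h
      _ = _ := by
        simp [Finset.sum_add_distrib, hM]
        ring
  have hvar : M ^ 2 * ∑ ω, (if E ω then w ω else 0) ≤ ∑ ω, w ω * (∑ x, J x ω - M) ^ 2 := by
    rw [Finset.mul_sum]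
    refine Finset.sum_le_sum fun ω _ => ?_
    split_ifs with h
    · simp [hE ω h, mul_comm]
    · simpa using mul_nonneg (hw ω) (sq_nonneg _)
  have hexp : ∑ ω, w ω * (∑ x, J x ω - M) ^ 2 = ∑ ω, w ω * (∑ x, J x ω) ^ 2 - M ^ 2 := by
    have : ∀ ω, w ω * (∑ x, J x ω - M) ^ 2 = w ω * (∑ x, J x ω) ^ 2 -
        2 * M * (w ω * ∑ x, J x ω) + M ^ 2 * w ω := fun ω => by ring
    simp_rw [this]
    rw [Finset.sum_add_distrib, Finset.sum_sub_distrib, ← Finset.mul_sum, ← Finset.mul_sum, hmean,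
      hw1]
    ring
  linarith

lemma exp_neg_le_one_sub_pow {x : ℝ} (h0 : 0 ≤ x) (h1 : x ≤ 1 / 2) (n : ℕ) :
    Real.exp (-(n * x + 2 * (n * x ^ 2))) ≤ (1 - x) ^ (n - 1) := by
  have hx : Real.exp (-(x + 2 * x ^ 2)) ≤ 1 - x := by
    rw [← Real.le_log_iff_exp_le (by linarith)]
    refine le_trans ?_ (Real.one_sub_inv_le_log_of_pos (by linarith : 0 < 1 - x))
    have : (1 - x)⁻¹ ≤ 1 + x + 2 * x ^ 2 := by
      rw [inv_le_iff_one_le_mul₀ (by linarith)]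
      nlinarith [mul_nonneg (sq_nonneg x) (by linarith : 0 ≤ 1 - 2 * x)]
    linarith
  calc Real.exp (-(n * x + 2 * (n * x ^ 2))) = Real.exp (-(x + 2 * x ^ 2)) ^ n := by
        rw [← Real.exp_nat_mul]; congr 1; ring
    _ ≤ (1 - x) ^ n := pow_le_pow_left₀ (Real.exp_pos _).le hx n
    _ ≤ (1 - x) ^ (n - 1) := pow_le_pow_of_le_one (by linarith) (by linarith) (Nat.sub_le n 1)

lemma one_add_pow_le_exp {y : ℝ} (h : 0 ≤ 1 + y) (m : ℕ) : (1 + y) ^ m ≤ Real.exp (m * y) := by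
  rw [Real.exp_nat_mul]
  exact pow_le_pow_left₀ h (by linarith [Real.add_one_le_exp y]) m

/-- Mixture estimate for the joint isolation probability. The key cancellation is
`p * (exp (n α Λ) - 1) ≤ (n Λ) (α p) exp (n Λ)` together with `α p ≤ Λ / μ₀`. -/
lemma mixture_le {n : ℕ} (hn : 2 ≤ n) {L p α C m0 : ℝ} (hL0 : 0 ≤ L) (hL : L ≤ 1 / 2)
    (hp0 : 0 ≤ p) (hp1 : p ≤ 1) (hα0 : 0 ≤ α) (hα1 : α ≤ 1) (hC : 0 ≤ C) (hm0 : 0 < m0)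
    (hpL : m0 * (α * p) ≤ L) :
    (1 - p) * (1 - 2 * L + C * L ^ 2) ^ (n - 2) + p * (1 - 2 * L + α * L) ^ (n - 2) ≤
      Real.exp (-(2 * (n - 2) * L)) *
        (Real.exp (C * (n * L ^ 2)) + n * L ^ 2 * Real.exp (n * L) / m0) := by
  have hm : ((n - 2 : ℕ) : ℝ) = n - 2 := by push_cast [Nat.cast_sub hn]; ring
  have hn2 : (2 : ℝ) ≤ n := by exact_mod_cast hn
  have hX : (1 - 2 * L + C * L ^ 2) ^ (n - 2) ≤
      Real.exp (-(2 * (n - 2) * L)) * Real.exp (C * (n * L ^ 2)) := by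
    have h := one_add_pow_le_exp (y := -2 * L + C * L ^ 2) (by nlinarith [sq_nonneg L]) (n - 2)
    rw [hm] at h
    rw [← Real.exp_add]
    refine le_trans (le_of_eq (by ring)) (h.trans (Real.exp_le_exp.2 ?_))
    nlinarith [mul_nonneg hC (sq_nonneg L)]
  have hY : (1 - 2 * L + α * L) ^ (n - 2) ≤
      Real.exp (-(2 * (n - 2) * L)) * Real.exp (n * (α * L)) := by
    have h := one_add_pow_le_exp (y := -2 * L + α * L) (by nlinarith) (n - 2)
    rw [hm] at h
    rw [← Real.exp_add]
    refine le_trans (le_of_eq (by ring)) (h.trans (Real.exp_le_exp.2 ?_))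
    nlinarith [mul_nonneg hα0 hL0]
  have hE : 0 < Real.exp (-(2 * (n - 2) * L)) := Real.exp_pos _
  have h1 : 1 ≤ Real.exp (C * (n * L ^ 2)) := Real.one_le_exp (by positivity)
  have hcancel : p * (Real.exp (n * (α * L)) - 1) ≤ n * L ^ 2 * Real.exp (n * L) / m0 := by
    set s := n * (α * L) with hs
    have hs0 : 0 ≤ s := by positivity
    have e1 : Real.exp s - 1 ≤ s * Real.exp s := by
      have := Real.add_one_le_exp (-s)
      have h2 : Real.exp (-s) * Real.exp s = 1 := by rw [← Real.exp_add]; simp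
      nlinarith [Real.exp_pos s]
    have e2 : Real.exp s ≤ Real.exp (n * L) := by
      refine Real.exp_le_exp.2 (mul_le_mul_of_nonneg_left ?_ (by positivity))
      nlinarith
    rw [le_div_iff₀ hm0]
    calc p * (Real.exp s - 1) * m0 ≤ p * (s * Real.exp (n * L)) * m0 := by
          refine mul_le_mul_of_nonneg_right (mul_le_mul_of_nonneg_left ?_ hp0) hm0.le
          exact e1.trans (mul_le_mul_of_nonneg_left e2 hs0)
      _ = (m0 * (α * p)) * (n * L * Real.exp (n * L)) := by rw [hs]; ring
      _ ≤ L * (n * L * Real.exp (n * L)) := mul_le_mul_of_nonneg_right hpL (by positivity)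
      _ = _ := by ring
  calc _ ≤ (1 - p) * (Real.exp (-(2 * (n - 2) * L)) * Real.exp (C * (n * L ^ 2))) +
        p * (Real.exp (-(2 * (n - 2) * L)) * Real.exp (n * (α * L))) :=
        add_le_add (mul_le_mul_of_nonneg_left hX (by linarith)) (mul_le_mul_of_nonneg_left hY hp0)
    _ = Real.exp (-(2 * (n - 2) * L)) *
        ((1 - p) * Real.exp (C * (n * L ^ 2)) + p * Real.exp (n * (α * L))) := by ring
    _ ≤ _ := mul_le_mul_of_nonneg_left (by nlinarith) hE.le

/-- Explicit upper bound for the probability of no isolated nodes, in terms of `Λ = L`. -/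
lemma pr_noIsolated_le {n r P : ℕ} {μ : Fin (r + 1) → ℝ} {K : Fin (r + 1) → ℕ} {α L : ℝ}
    (hn : 2 ≤ n) (hμ : ∀ i, 0 < μ i) (hμs : ∑ i, μ i = 1) (hK : ∀ j, K j ≤ P)
    (hα : α ∈ Set.Ioo (0 : ℝ) 1) (hL : α * lamb μ K P 0 = L) (hL2 : L ≤ 1 / 2) :
    pr μ K α (fun c : Config n r P => NoIsolatedNodes c) ≤
      Real.exp (n * L) / n * Real.exp (2 * (n * L ^ 2)) / μ 0 +
      Real.exp (4 * L + 4 * (n * L ^ 2)) * (Real.exp ((∑ j, (μ j)⁻¹) * (n * L ^ 2)) +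
        n * L ^ 2 * Real.exp (n * L) / μ 0) - 1 := by
  classical
  set C := ∑ j, (μ j)⁻¹ with hC
  have hC0 : 0 ≤ C := Finset.sum_nonneg fun j _ => inv_nonneg.2 (hμ j).le
  have hL0 : 0 ≤ L := hL ▸ mul_nonneg hα.1.le (lamb_nonneg hμ hK)
  have hn0 : (0 : ℝ) < n := by exact_mod_cast (by omega : 0 < n)
  have hμ0 := hμ 0
  set W := Real.exp (-(2 * (n - 2) * L)) *
        (Real.exp (C * (n * L ^ 2)) + n * L ^ 2 * Real.exp (n * L) / μ 0) with hW
  have hW0 : 0 ≤ W := by positivity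
  have hmix := mixture_le hn hL0 hL2 (pEdge_nonneg (hK 0) (hK 0)) (pEdge_le_one P (K 0) (K 0))
    hα.1.le hα.2.le hC0 hμ0 (by
      have := mul_le_mul_of_nonneg_left (mul_pEdge_le_lamb hμ hK 0) hα.1.le
      rw [hL] at this
      linarith)
  set q := (1 - L) ^ (n - 1) with hq
  have hch := chebyshev_count (wt μ K α) (wt_nonneg (n := n) (P := P) hμ hα) (sum_wt_one hμs hK)
    isoInd (fun x c => by unfold isoInd; split_ifs <;> simp) (m₁ := μ 0 * q)
    (m₂ := μ 0 ^ 2 * W)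
    (fun x => by rw [first_moment hμs hK, hL])
    (fun x y hxy => (second_moment hμ hμs hK hα hxy rfl rfl).trans
      (mul_le_mul_of_nonneg_left (by rw [hL]; exact hmix) (by positivity)))
    (by positivity) (fun c => NoIsolatedNodes c)
    (fun c hc x => by
      unfold isoInd
      rw [if_neg fun h => hc x h.2])
  have hpr : ∑ c : Config n r P, (if NoIsolatedNodes c then wt μ K α c else 0) =
      pr μ K α (fun c : Config n r P => NoIsolatedNodes c) := by
    unfold pr
    exact Finset.sum_congr rfl fun c _ => by congr
  rw [hpr, Fintype.card_fin] at hch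
  set pp := pr μ K α (fun c : Config n r P => NoIsolatedNodes c)
  have hG := exp_neg_le_one_sub_pow hL0 hL2 n
  rw [← hq] at hG
  have hq0 : 0 < q := lt_of_lt_of_le (Real.exp_pos _) hG
  have hqi : q⁻¹ ≤ Real.exp (n * L + 2 * (n * L ^ 2)) := by
    rw [inv_le_comm₀ hq0 (Real.exp_pos _), ← Real.exp_neg]
    exact hG
  have hmain : pp ≤ q⁻¹ / (n * μ 0) + W * q⁻¹ ^ 2 - 1 := by
    have hpos : 0 < (n * (μ 0 * q)) ^ 2 := by positivity
    refine le_of_mul_le_mul_left (hch.trans (le_of_eq ?_)) hpos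
    field_simp
  have hW2 : W * q⁻¹ ^ 2 ≤ Real.exp (4 * L + 4 * (n * L ^ 2)) * (Real.exp (C * (n * L ^ 2)) +
        n * L ^ 2 * Real.exp (n * L) / μ 0) := by
    calc W * q⁻¹ ^ 2 ≤ W * Real.exp (n * L + 2 * (n * L ^ 2)) ^ 2 :=
          mul_le_mul_of_nonneg_left (pow_le_pow_left₀ (by positivity) hqi 2) hW0
      _ = (Real.exp (-(2 * (n - 2) * L)) * Real.exp (n * L + 2 * (n * L ^ 2)) ^ 2) *
          (Real.exp (C * (n * L ^ 2)) + n * L ^ 2 * Real.exp (n * L) / μ 0) := by rw [hW]; ring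
      _ = _ := by
        congr 1
        rw [← Real.exp_nat_mul, ← Real.exp_add]
        congr 1
        push_cast
        ring
  have h1 : q⁻¹ / (n * μ 0) ≤ Real.exp (n * L) / n * Real.exp (2 * (n * L ^ 2)) / μ 0 := by
    calc q⁻¹ / (n * μ 0) ≤ Real.exp (n * L + 2 * (n * L ^ 2)) / (n * μ 0) := by gcongr
      _ = _ := by rw [Real.exp_add]; field_simp
  linarith

/-- Consequences of `0 ≤ Λ ≤ d log n / n` with `d < 1`. -/
lemma scaling_limits {L : ℕ → ℝ} {d : ℝ} (hd1 : d < 1) (hL0 : ∀ n, 0 ≤ L n)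
    (hL : ∀ᶠ n : ℕ in atTop, L n ≤ d * Real.log n / n) :
    Tendsto L atTop (nhds 0) ∧
    Tendsto (fun n : ℕ => n * L n ^ 2 * Real.exp (n * L n)) atTop (nhds 0) ∧
    Tendsto (fun n : ℕ => Real.exp (n * L n) / n) atTop (nhds 0) := by
  have hlog : Tendsto (fun n : ℕ => Real.log n) atTop atTop :=
    Real.tendsto_log_atTop.comp tendsto_natCast_atTop_atTop
  have hdlog : Tendsto (fun n : ℕ => (1 - d) * Real.log n) atTop atTop :=
    hlog.const_mul_atTop (by linarith)
  have hge : ∀ᶠ n : ℕ in atTop, (0 : ℝ) < n :=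
    (eventually_gt_atTop 0).mono fun n hn => by exact_mod_cast hn
  have hinv : ∀ n : ℕ, (0 : ℝ) < n → (n : ℝ)⁻¹ = Real.exp (-Real.log n) := fun n hn => by
    rw [Real.exp_neg, Real.exp_log hn]
  have hexp : ∀ n : ℕ, (0 : ℝ) < n → L n ≤ d * Real.log n / n →
      Real.exp (n * L n) / n ≤ Real.exp (-((1 - d) * Real.log n)) := fun n hn h => by
    rw [div_eq_mul_inv, hinv n hn, ← Real.exp_add]
    refine Real.exp_le_exp.2 ?_
    rw [le_div_iff₀ hn] at h
    linarith
  refine ⟨?_, ?_, ?_⟩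
  · have h1 := ((Real.tendsto_pow_mul_exp_neg_atTop_nhds_zero 1).comp hlog).const_mul d
    rw [mul_zero] at h1
    refine squeeze_zero' (Eventually.of_forall hL0) ?_ h1
    filter_upwards [hL, hge] with n hn hn0
    refine hn.trans (le_of_eq ?_)
    simp only [Function.comp, pow_one]
    rw [← hinv n hn0]
    ring
  · have h1 := ((Real.tendsto_pow_mul_exp_neg_atTop_nhds_zero 2).comp hdlog).const_mul
      (d ^ 2 / (1 - d) ^ 2)
    rw [mul_zero] at h1
    refine squeeze_zero' (Eventually.of_forall fun n => by positivity) ?_ h1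
    filter_upwards [hL, hge] with n hn hn0
    have hs : (n * L n) ^ 2 ≤ (d * Real.log n) ^ 2 := by
      refine pow_le_pow_left₀ (mul_nonneg hn0.le (hL0 n)) ?_ 2
      rw [le_div_iff₀ hn0] at hn
      linarith
    have hd : 1 - d ≠ 0 := by linarith
    calc n * L n ^ 2 * Real.exp (n * L n) = (n * L n) ^ 2 * (Real.exp (n * L n) / n) := by
          field_simp
      _ ≤ (d * Real.log n) ^ 2 * Real.exp (-((1 - d) * Real.log n)) :=
          mul_le_mul hs (hexp n hn0 hn) (by positivity) (sq_nonneg _)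
      _ = _ := by
        simp only [Function.comp]
        field_simp
  · refine squeeze_zero' (Eventually.of_forall fun n => by positivity) ?_
      (Real.tendsto_exp_neg_atTop_nhds_zero.comp hdlog)
    filter_upwards [hL, hge] with n hn hn0
    exact hexp n hn0 hn

/-- zero-law for absence of isolated nodes:
under the scaling `Λ₁(n) = αₙ λ₁(n) = cₙ log n / n` with `cₙ → c < 1`, the probability
that `G(n; μ, Kₙ, Pₙ, αₙ)` has no isolated nodes tends to `0`. -/
theorem isolated_nodes_zero_law {r : ℕ} (μ : Fin (r + 1) → ℝ)
    (hμpos : ∀ i, 0 < μ i) (hμsum : ∑ i, μ i = 1)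
    (K : ℕ → Fin (r + 1) → ℕ) (P : ℕ → ℕ) (α : ℕ → ℝ)
    (hK1 : ∀ n, 1 ≤ K n 0) (hKmono : ∀ n, Monotone (K n))
    (hKP : ∀ n, 2 * K n (Fin.last r) ≤ P n)
    (hα : ∀ n, α n ∈ Set.Ioo (0 : ℝ) 1)
    (cseq : ℕ → ℝ) (c : ℝ)
    (hscal : ∀ n, 2 ≤ n → α n * lamb μ (K n) (P n) 0 = cseq n * Real.log n / n)
    (hc : Tendsto cseq atTop (nhds c)) (hclt : c < 1) :
    Tendsto (fun n => pr μ (K n) (α n) (fun cfg : Config n r (P n) => NoIsolatedNodes cfg))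
      atTop (nhds 0) := by
  have hK : ∀ n j, K n j ≤ P n := fun n j => by
    have := hKmono n (Fin.le_last j)
    have := hKP n
    omega
  -- A constant `d` strictly between `c` and `1` absorbs the fluctuation of `cₙ` around `c`.
  obtain ⟨d, hcd, hd1⟩ := exists_between hclt
  set L : ℕ → ℝ := fun n => α n * lamb μ (K n) (P n) 0 with hLdef
  have hL0 : ∀ n, 0 ≤ L n := fun n => mul_nonneg (hα n).1.le (lamb_nonneg hμpos (hK n))
  have hLd : ∀ᶠ n : ℕ in atTop, L n ≤ d * Real.log n / n := by
    filter_upwards [hc.eventually_le_const hcd, eventually_ge_atTop 2] with n hn hn2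
    rw [hLdef]
    simp only
    rw [hscal n hn2]
    have : 0 ≤ Real.log n := Real.log_natCast_nonneg n
    gcongr
  obtain ⟨hlim0, hlim1, hlim2⟩ := scaling_limits hd1 hL0 hLd
  have hlim3 : Tendsto (fun n : ℕ => n * L n ^ 2) atTop (nhds 0) := by
    refine squeeze_zero (fun n => by positivity) (fun n => ?_) hlim1
    exact le_mul_of_one_le_right (by positivity)
      (Real.one_le_exp (mul_nonneg (Nat.cast_nonneg n) (hL0 n)))
  have hbound : Tendsto (fun n : ℕ =>
      Real.exp (n * L n) / n * Real.exp (2 * (n * L n ^ 2)) / μ 0 +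
      Real.exp (4 * L n + 4 * (n * L n ^ 2)) * (Real.exp ((∑ j, (μ j)⁻¹) * (n * L n ^ 2)) +
        n * L n ^ 2 * Real.exp (n * L n) / μ 0) - 1) atTop (nhds 0) := by
    have hex : ∀ {f : ℕ → ℝ}, Tendsto f atTop (nhds 0) →
        Tendsto (fun n => Real.exp (f n)) atTop (nhds 1) := fun {f} hf => by
      simpa [Function.comp_def] using (Real.continuous_exp.tendsto 0).comp hf
    have e1 := hex (f := fun n : ℕ => 2 * (n * L n ^ 2)) (by simpa using hlim3.const_mul 2)
    have e2 := hex (f := fun n : ℕ => 4 * L n + 4 * (n * L n ^ 2))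
      (by simpa using (hlim0.const_mul 4).add (hlim3.const_mul 4))
    have e3 := hex (f := fun n : ℕ => (∑ j, (μ j)⁻¹) * (n * L n ^ 2))
      (by simpa using hlim3.const_mul (∑ j, (μ j)⁻¹))
    have := (((hlim2.mul e1).div_const (μ 0)).add
      (e2.mul (e3.add (hlim1.div_const (μ 0))))).sub_const 1
    simpa using this
  refine squeeze_zero' (Eventually.of_forall fun n => ?_) ?_ hbound
  · refine Finset.sum_nonneg fun cfg _ => ?_
    split_ifs
    · exact wt_nonneg hμpos (hα n) cfg
    · exact le_rfl
  · filter_upwards [hlim0.eventually_le_const (by norm_num : (0 : ℝ) < 1 / 2),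
      eventually_ge_atTop 2] with n hn hn2
    exact pr_noIsolated_le hn2 hμpos hμsum (hK n) (hα n) rfl hn
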